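/- Let Z^J be the structure algebra of a parabolic Bruhat moment graph over the symmetric algebra S, and let ₛσ be the involution of Z^J defined by (ₛσ z)_x = τ_s(z_{(sx)^J}), where τ_s is the algebra automorphism of S induced by the reflection s on V. Then Z^J decomposes as a module over the invariants: Z^J = (Z^J)^{ₛσ} ⊕ ᾱ_s · (Z^J)^{ₛσ}, where ᾱ_s is the constant section with all components equal to α_s. -/

import Mathlib

/-- The set `W^J` of minimal length representatives of the cosets `W/W_J`. -/
def minReps {B W : Type*} [Group W] {M : CoxeterMatrix B}
    (cs : CoxeterSystem M W) (J : Set B) : Set W :=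
  {w | ∀ i ∈ J, cs.length w < cs.length (w * cs.simple i)}

/-- The structure algebra `Z^J` of the parabolic Bruhat moment graph: tuples
`(z_x)_{x ∈ W^J}` of elements of the base ring `S` (playing the role of `Sym(V)`)
such that `z_x - z_y` is divisible by the label `α_t` whenever `x` and `y = (tx)^J`
are joined by an edge coming from a reflection `t`. -/
def structAlg {B W : Type*} [Group W] {M : CoxeterMatrix B}
    (cs : CoxeterSystem M W) (J : Set B) (S : Type*) [CommRing S]
    (α : W → S) : Set ((minReps cs J) → S) :=
  {z | ∀ t : W, cs.IsReflection t → ∀ x y : minReps cs J,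
    (y : W)⁻¹ * (t * (x : W)) ∈ Subgroup.closure (cs.simple '' J) →
    z x - z y ∈ Ideal.span {α t}}

/-- The involution `ₛσ` on tuples: `(ₛσ z)_x = τ_s (z_{(sx)^J})`, where
`m : W → W^J` takes the minimal length representative of a coset. -/
def sigmaInvol {B W : Type*} [Group W] {M : CoxeterMatrix B}
    (cs : CoxeterSystem M W) (J : Set B) (S : Type*) [CommRing S]
    (τ : W →* RingAut S) (mrep : W → minReps cs J) (i : B)
    (z : (minReps cs J) → S) : (minReps cs J) → S :=
  fun x => τ (cs.simple i) (z (mrep (cs.simple i * (x : W))))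

section Helpers

open List

variable {B W : Type*} [Group W] {M : CoxeterMatrix B} (cs : CoxeterSystem M W)

open Classical in
/-- The reflection permutation attached to a simple reflection. -/
noncomputable def reflFun (i : B) (p : W × ZMod 2) : W × ZMod 2 :=
  (cs.simple i * p.1 * cs.simple i, p.2 + if p.1 = cs.simple i then 1 else 0)

theorem reflFun_invol (i : B) (p : W × ZMod 2) : reflFun cs i (reflFun cs i p) = p := by
  obtain ⟨t, e⟩ := p
  have h : cs.simple i * t * cs.simple i = cs.simple i ↔ t = cs.simple i := by
    constructor
    · intro h
      have := congrArg (fun u => cs.simple i * u * cs.simple i) h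
      simpa [mul_assoc] using this
    · rintro rfl
      simp
  have h11 : (1 : ZMod 2) + 1 = 0 := by decide
  by_cases ht : t = cs.simple i
  · subst ht
    simp [reflFun, add_assoc, h11]
  · simp [reflFun, h, ht]
    simp [mul_assoc]

/-- The same, as an element of the endomorphism monoid. -/
noncomputable def reflEnd (i : B) : Function.End (W × ZMod 2) := reflFun cs i

open Classical in
theorem reflEnd_pow (i j : B) (n : ℕ) (t : W) (e : ZMod 2) :
    ((reflEnd cs i * reflEnd cs j) ^ n) (t, e) =
      ((cs.simple i * cs.simple j) ^ n * t * (cs.simple j * cs.simple i) ^ n,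
        e + ∑ k ∈ Finset.range (2 * n),
          if t = (cs.simple j * cs.simple i) ^ k * cs.simple j then 1 else 0) := by
  induction n with
  | zero => simp; rfl
  | succ n ih =>
    have hinv : ((cs.simple i * cs.simple j) ^ n)⁻¹ = (cs.simple j * cs.simple i) ^ n := by
      rw [← inv_pow]; simp
    have hsj : cs.simple j * (cs.simple i * cs.simple j) ^ n
        = (cs.simple j * cs.simple i) ^ n * cs.simple j := by
      clear ih hinv
      induction n with
      | zero => simp
      | succ n ih => rw [pow_succ, ← mul_assoc, ih, pow_succ]; simp only [mul_assoc]
    have key : ∀ a b : W, (cs.simple i * cs.simple j) ^ n * a * (cs.simple j * cs.simple i) ^ n = b ↔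
        a = (cs.simple j * cs.simple i) ^ n * b * (cs.simple i * cs.simple j) ^ n := by
      intro a b
      rw [← hinv]
      constructor
      · rintro rfl; group
      · rintro rfl; group
    have h1 : (cs.simple i * cs.simple j) ^ n * t * (cs.simple j * cs.simple i) ^ n = cs.simple j ↔
        t = (cs.simple j * cs.simple i) ^ (2 * n) * cs.simple j := by
      rw [key, mul_assoc, hsj, two_mul, pow_add, mul_assoc]
    have h2 : cs.simple j * ((cs.simple i * cs.simple j) ^ n * t * (cs.simple j * cs.simple i) ^ n)
        * cs.simple j = cs.simple i ↔
        t = (cs.simple j * cs.simple i) ^ (2 * n + 1) * cs.simple j := by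
      have : ∀ a : W, cs.simple j * a * cs.simple j = cs.simple i ↔
          a = cs.simple j * cs.simple i * cs.simple j := by
        intro a
        constructor
        · intro h; rw [← h]; simp [mul_assoc]
        · rintro rfl; simp [mul_assoc]
      rw [this, key, mul_assoc, mul_assoc (cs.simple j * cs.simple i), hsj, ← mul_assoc,
        ← mul_assoc, ← pow_succ, ← pow_add]
      have : n + 1 + n = 2 * n + 1 := by ring
      rw [this]
    rw [pow_succ']
    change reflFun cs i (reflFun cs j (((reflEnd cs i * reflEnd cs j) ^ n) (t, e))) = _
    rw [ih, show 2 * (n + 1) = 2 * n + 1 + 1 by ring, Finset.sum_range_succ, Finset.sum_range_succ]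
    simp only [reflFun, h1, h2]
    refine Prod.ext ?_ ?_
    · rw [pow_succ' (cs.simple i * cs.simple j), pow_succ (cs.simple j * cs.simple i) n]
      simp only [mul_assoc]
    · simp only [add_assoc]

theorem reflEnd_liftable : M.IsLiftable (reflEnd cs) := by
  classical
  intro i j
  funext p
  obtain ⟨t, e⟩ := p
  rw [reflEnd_pow]
  have h1 : (cs.simple i * cs.simple j) ^ M i j = 1 := cs.simple_mul_simple_pow i j
  have h2 : (cs.simple j * cs.simple i) ^ M i j = 1 := cs.simple_mul_simple_pow' i j
  have h11 : ∀ a : ZMod 2, a + a = 0 := by decide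
  rw [two_mul, Finset.sum_range_add]
  simp only [pow_add, h1, h2, one_mul, mul_one, h11, add_zero]
  rfl

open Classical in
theorem lift_wordProd (ω : List B) (t : W) (e : ZMod 2) :
    (cs.lift ⟨reflEnd cs, reflEnd_liftable cs⟩ (cs.wordProd ω)) (t, e) =
      (cs.wordProd ω * t * (cs.wordProd ω)⁻¹, e + ((cs.rightInvSeq ω).count t : ZMod 2)) := by
  induction ω with
  | nil => simp; rfl
  | cons i ω ih =>
    rw [cs.wordProd_cons, map_mul, cs.lift_apply_simple]
    change reflFun cs i (cs.lift ⟨reflEnd cs, reflEnd_liftable cs⟩ (cs.wordProd ω) (t, e)) = _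
    rw [ih]
    have h : cs.wordProd ω * t * (cs.wordProd ω)⁻¹ = cs.simple i ↔
        (cs.wordProd ω)⁻¹ * cs.simple i * cs.wordProd ω = t := by
      constructor
      · intro h; rw [← h]; group
      · rintro rfl; group
    simp only [reflFun, h, CoxeterSystem.rightInvSeq, List.count_cons, beq_iff_eq]
    refine Prod.ext ?_ ?_
    · simp [mul_assoc]
    · push_cast
      simp only [add_assoc]

theorem exchange_simple (ω : List B) (i : B)
    (h : cs.length (cs.wordProd ω * cs.simple i) < cs.length (cs.wordProd ω)) :
    ∃ j < ω.length, cs.wordProd (ω.eraseIdx j) = cs.wordProd ω * cs.simple i := by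
  classical
  have hmem : cs.simple i ∈ cs.rightInvSeq ω := by
    by_contra hn
    obtain ⟨η, hη, hw⟩ := cs.exists_isReduced (cs.wordProd ω * cs.simple i)
    have e1 := lift_wordProd cs η (cs.simple i) 0
    rw [← hw, map_mul, cs.lift_apply_simple] at e1
    change cs.lift ⟨reflEnd cs, reflEnd_liftable cs⟩ (cs.wordProd ω)
      (reflFun cs i (cs.simple i, 0)) = _ at e1
    have e0 : reflFun cs i (cs.simple i, 0) = (cs.simple i, 1) := by simp [reflFun]
    rw [e0, lift_wordProd, List.count_eq_zero_of_not_mem hn] at e1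
    have e2 := congrArg Prod.snd e1
    have hmem' : cs.simple i ∈ cs.rightInvSeq η := by
      by_contra hn'
      rw [List.count_eq_zero_of_not_mem hn'] at e2
      simp at e2
    have := (cs.isRightInversion_of_mem_rightInvSeq hη hmem').2
    rw [← hw] at this
    simp at this
    omega
  obtain ⟨j, hj, hji⟩ := List.mem_iff_getElem.mp hmem
  refine ⟨j, by simpa using hj, ?_⟩
  rw [← cs.wordProd_mul_getD_rightInvSeq, List.getD_eq_getElem _ 1 hj, hji]

theorem exists_J_word (J : Set B) {u : W} (hu : u ∈ Subgroup.closure (cs.simple '' J)) :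
    ∃ ω : List B, (∀ b ∈ ω, b ∈ J) ∧ cs.wordProd ω = u := by
  induction hu using Subgroup.closure_induction with
  | mem x hx =>
    obtain ⟨b, hb, rfl⟩ := hx
    exact ⟨[b], by simpa using hb, by simp⟩
  | one => exact ⟨[], by simp, by simp⟩
  | mul x y _ _ hx hy =>
    obtain ⟨a, ha, rfl⟩ := hx
    obtain ⟨b, hb, rfl⟩ := hy
    refine ⟨a ++ b, ?_, cs.wordProd_append a b⟩
    intro c hc
    rcases List.mem_append.mp hc with h | h
    · exact ha c h
    · exact hb c h
  | inv x _ hx =>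
    obtain ⟨a, ha, rfl⟩ := hx
    exact ⟨a.reverse, by simpa using ha, by simp⟩

theorem wordProd_mem (J : Set B) (ω : List B) (h : ∀ b ∈ ω, b ∈ J) :
    cs.wordProd ω ∈ Subgroup.closure (cs.simple '' J) := by
  induction ω with
  | nil => simp
  | cons b ω ih =>
    rw [cs.wordProd_cons]
    exact mul_mem (Subgroup.subset_closure ⟨b, h b (by simp), rfl⟩)
      (ih fun c hc => h c (by simp [hc]))

theorem eq_of_min (J : Set B) (m x : W)
    (hm : ∀ u ∈ Subgroup.closure (cs.simple '' J), cs.length m ≤ cs.length (m * u))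
    (hx : x ∈ minReps cs J) (n : ℕ) : ∀ ω : List B, ω.length = n → (∀ b ∈ ω, b ∈ J) →
      m * cs.wordProd ω = x → m = x := by
  induction n using Nat.strong_induction_on with
  | _ n ih =>
  intro ω hn hJ hω
  rcases List.eq_nil_or_concat ω with rfl | ⟨ω', b, rfl⟩
  · simpa using hω
  rw [List.concat_eq_append] at hn hJ hω
  have hbJ : b ∈ J := hJ b (by simp)
  have hJ' : ∀ c ∈ ω', c ∈ J := fun c hc => hJ c (by simp [hc])
  have hlt := hx b hbJ
  have hxb : x * cs.simple b = m * cs.wordProd ω' := by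
    rw [← hω, cs.wordProd_append]; simp [mul_assoc]
  have hxe : x = m * cs.wordProd ω' * cs.simple b := by rw [← hxb]; simp
  obtain ⟨η, hη, rfl⟩ := cs.exists_isReduced m
  obtain ⟨j, hj, he⟩ := exchange_simple cs (η ++ ω') b (by
    rw [cs.wordProd_append, ← hxe, ← hxb]; exact hlt)
  rw [cs.wordProd_append, ← hxe] at he
  simp only [List.length_append, List.length_singleton] at hn hj
  by_cases hjη : j < η.length
  · exfalso
    rw [List.eraseIdx_append_of_lt_length hjη, cs.wordProd_append] at he
    have h1 := hm ((cs.wordProd η)⁻¹ * cs.wordProd (η.eraseIdx j)) (by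
      have : (cs.wordProd η)⁻¹ * cs.wordProd (η.eraseIdx j) =
          cs.wordProd ω' * cs.simple b * (cs.wordProd ω')⁻¹ := by
        rw [eq_mul_inv_of_mul_eq he, hxe]; group
      rw [this]
      have h3 := wordProd_mem cs J ω' hJ'
      exact mul_mem (mul_mem h3 (Subgroup.subset_closure ⟨b, hbJ, rfl⟩)) (inv_mem h3))
    rw [mul_inv_cancel_left, hη.eq] at h1
    have h2 := cs.length_wordProd_le (η.eraseIdx j)
    have h3 := List.length_eraseIdx_add_one hjη
    omega
  · rw [List.eraseIdx_append_of_length_le (by omega), cs.wordProd_append] at he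
    have h3 : (ω'.eraseIdx (j - η.length)).length + 1 = ω'.length :=
      List.length_eraseIdx_add_one (by omega)
    exact ih _ (by omega) _ rfl (fun c hc => hJ' c (List.mem_of_mem_eraseIdx hc)) he

theorem exists_minimal_length (J : Set B) (x : W) :
    ∃ u, u ∈ Subgroup.closure (cs.simple '' J) ∧
      ∀ v ∈ Subgroup.closure (cs.simple '' J), cs.length (x * u) ≤ cs.length (x * v) := by
  obtain ⟨u, hu, h⟩ := WellFounded.has_min (measure fun u : W => cs.length (x * u)).wf
    (Subgroup.closure (cs.simple '' J) : Set W) ⟨1, one_mem _⟩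
  exact ⟨u, hu, fun v hv => not_lt.mp (h v hv)⟩

theorem minReps_unique (J : Set B) (x y : W) (hx : x ∈ minReps cs J) (hy : y ∈ minReps cs J)
    (h : y⁻¹ * x ∈ Subgroup.closure (cs.simple '' J)) : x = y := by
  obtain ⟨u, hu⟩ := exists_minimal_length cs J x
  obtain ⟨hu, hmin⟩ := hu
  have main : ∀ v ∈ minReps cs J, v⁻¹ * x ∈ Subgroup.closure (cs.simple '' J) → x * u = v := by
    intro v hv hvx
    obtain ⟨ω, hJ, hω⟩ := exists_J_word cs J (u := u⁻¹ * (v⁻¹ * x)⁻¹)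
      (mul_mem (inv_mem hu) (inv_mem hvx))
    refine eq_of_min cs J (x * u) v ?_ hv _ ω rfl hJ ?_
    · intro u' hu'
      rw [mul_assoc]
      exact hmin _ (mul_mem hu hu')
    · rw [hω]; group
  rw [← main x hx (by simp), ← main y hy h]

end Helpers

/-- the structure algebra decomposes over the `ₛσ`-invariants as
`Z^J = (Z^J)^{ₛσ} ⊕ ᾱ_s · (Z^J)^{ₛσ}`: every `z ∈ Z^J` is uniquely `p + ᾱ_s • q`
with `p, q` invariant elements of `Z^J`. -/
theorem structAlg_invariant_decomposition {B W : Type*} [Group W] {M : CoxeterMatrix B}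
    (cs : CoxeterSystem M W) (J : Set B)
    (S : Type*) [CommRing S] [IsDomain S]
    (τ : W →* RingAut S) (α : W → S)
    (mrep : W → minReps cs J)
    (hmrep : ∀ w : W, ((mrep w : W))⁻¹ * w ∈ Subgroup.closure (cs.simple '' J))
    (i : B)
    (h2 : IsUnit (2 : S))
    (hτα : τ (cs.simple i) (α (cs.simple i)) = - α (cs.simple i))
    (hmod : ∀ p : S, τ (cs.simple i) p - p ∈ Ideal.span {α (cs.simple i)})
    (hconj : ∀ t : W, cs.IsReflection t → ∃ u : Sˣ,
      τ (cs.simple i) (α t) = (u : S) * α (cs.simple i * t * (cs.simple i)⁻¹))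
    (hprime : ∀ t : W, cs.IsReflection t → Prime (α t))
    (hlin : ∀ t : W, cs.IsReflection t → t ≠ cs.simple i →
      α (cs.simple i) ∉ Ideal.span {α t}) :
    (∀ z ∈ structAlg cs J S α, ∃ p ∈ structAlg cs J S α, ∃ q ∈ structAlg cs J S α,
      sigmaInvol cs J S τ mrep i p = p ∧ sigmaInvol cs J S τ mrep i q = q ∧
      z = p + α (cs.simple i) • q) ∧
    (∀ p ∈ structAlg cs J S α, ∀ q ∈ structAlg cs J S α,
      sigmaInvol cs J S τ mrep i p = p → sigmaInvol cs J S τ mrep i q = q →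
      p + α (cs.simple i) • q = 0 → p = 0 ∧ q = 0) := by
  obtain ⟨c, hc⟩ := h2.exists_right_inv
  set s := cs.simple i with hs
  have hss : s * s = 1 := cs.simple_mul_simple_self i
  have hsi : s⁻¹ = s := cs.inv_simple i
  have hsr : cs.IsReflection s := cs.isReflection_simple i
  set a := α s with ha
  have ha0 : a ≠ 0 := (hprime s hsr).ne_zero
  have hττ : ∀ b : S, τ s (τ s b) = b := by
    intro b
    have : (τ s * τ s) b = b := by rw [← map_mul, hss, map_one]; rfl
    exact this
  have h20 : (2 : S) ≠ 0 := h2.ne_zero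
  have hτc : τ s c = c := by
    have h := congrArg (τ s) hc
    rw [map_mul, map_one, map_ofNat] at h
    exact mul_left_cancel₀ h20 (h.trans hc.symm)
  have huniq : ∀ x y : minReps cs J,
      (y : W)⁻¹ * (x : W) ∈ Subgroup.closure (cs.simple '' J) → x = y := fun x y h =>
    Subtype.ext (minReps_unique cs J x y x.2 y.2 h)
  have hmm : ∀ x : minReps cs J, mrep (s * (mrep (s * (x : W)) : W)) = x := by
    intro x
    refine (huniq _ _ ?_).symm
    have h1 := hmrep (s * (mrep (s * (x : W)) : W))
    have h3 := mul_mem h1 (hmrep (s * (x : W)))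
    convert h3 using 1
    simp only [mul_assoc, mul_inv_cancel_left]
    rw [← mul_assoc s s, hss, one_mul]
  -- description of `σ`
  have hσ : ∀ (z : minReps cs J → S) x,
      sigmaInvol cs J S τ mrep i z x = τ s (z (mrep (s * (x : W)))) := fun _ _ => rfl
  have hσσ : ∀ (z : minReps cs J → S) (x : minReps cs J),
      τ s (sigmaInvol cs J S τ mrep i z (mrep (s * (x : W)))) = z x := by
    intro z x
    rw [hσ, hmm, hττ]
  have hσZ : ∀ z ∈ structAlg cs J S α, sigmaInvol cs J S τ mrep i z ∈ structAlg cs J S α := by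
    intro z hz t ht x y hxy
    have ht' : cs.IsReflection (s * t * s⁻¹) := ht.conj s
    have h1 := hz _ ht' (mrep (s * (x : W))) (mrep (s * (y : W))) (by
      have hx' := inv_mem (hmrep (s * (x : W)))
      have hy' := hmrep (s * (y : W))
      have := mul_mem (mul_mem hy' hxy) hx'
      convert this using 1
      group)
    rw [Ideal.mem_span_singleton] at h1 ⊢
    obtain ⟨d, hd⟩ := h1
    obtain ⟨u, hu⟩ := hconj _ ht'
    have e : s * (s * t * s⁻¹) * s⁻¹ = t := by
      rw [hsi]
      calc s * (s * t * s) * s = (s * s) * t * (s * s) := by group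
        _ = t := by rw [hss]; simp
    rw [e] at hu
    rw [hσ, hσ, ← map_sub, hd, map_mul, hu]
    exact ⟨u * τ s d, by ring⟩
  refine ⟨?_, ?_⟩
  · intro z hz
    have hdiv : ∀ x, ∃ q : S, z x - sigmaInvol cs J S τ mrep i z x = a * q := by
      intro x
      have h1 := hz s hsr x (mrep (s * (x : W))) (hmrep _)
      have h2' := hmod (z (mrep (s * (x : W))))
      have h3 := sub_mem h1 h2'
      rw [Ideal.mem_span_singleton] at h3
      obtain ⟨q, hq⟩ := h3
      exact ⟨q, by rw [hσ, ← hq]; ring⟩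
    choose q hq using hdiv
    have hqinv : ∀ x : minReps cs J, τ s (q (mrep (s * (x : W)))) = q x := by
      intro x
      have h1 := congrArg (τ s) (hq (mrep (s * (x : W))))
      rw [map_sub, hσσ, map_mul, hτα, ← hσ] at h1
      apply mul_left_cancel₀ ha0
      rw [← hq x]
      linear_combination h1
    have hσz := hσZ z hz
    refine ⟨fun x => c * (z x + sigmaInvol cs J S τ mrep i z x), ?_, fun x => c * q x, ?_,
      ?_, ?_, ?_⟩
    · intro t ht x y hxy
      have := Ideal.mul_mem_left _ c (add_mem (hz t ht x y hxy) (hσz t ht x y hxy))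
      convert this using 1
      ring
    · intro t ht x y hxy
      have : q x - q y ∈ Ideal.span {α t} := by
        by_cases hts : t = s
        · subst hts
          have hy : mrep (s * (x : W)) = y := by
            refine (huniq _ _ ?_)
            have h1 := mul_mem hxy (inv_mem (hmrep (s * (x : W))))
            convert h1 using 1
            group
          have h1 := hqinv x
          rw [hy] at h1
          rw [← h1]
          exact hmod _
        · have h1 := sub_mem (hz t ht x y hxy) (hσz t ht x y hxy)
          rw [Ideal.mem_span_singleton] at h1 ⊢
          have h3 : α t ∣ a * (q x - q y) := by
            convert h1 using 1
            linear_combination -(hq x) + hq y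
          rcases (hprime t ht).dvd_or_dvd h3 with h | h
          · exact absurd (Ideal.mem_span_singleton.mpr h) (hlin t ht hts)
          · exact h
      have := Ideal.mul_mem_left _ c this
      convert this using 1
      ring
    · funext x
      rw [hσ, map_mul, map_add, hτc, hσσ, ← hσ, add_comm]
    · funext x
      rw [hσ, map_mul, hτc, hqinv]
    · funext x
      simp only [Pi.add_apply, Pi.smul_apply, smul_eq_mul]
      linear_combination (-z x) * hc + c * hq x
  · intro p hp q hq hσp hσq h0
    have hx0 : ∀ x, p x + a * q x = 0 := fun x => by simpa using congrFun h0 x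
    have h1 : ∀ x, p x - a * q x = 0 := by
      intro x
      have h := congrArg (τ s) (hx0 (mrep (s * (x : W))))
      rw [map_add, map_mul, hτα, map_zero, ← hσ, ← hσ, hσp, hσq] at h
      linear_combination h
    constructor
    · funext x
      apply mul_left_cancel₀ h20
      simp only [Pi.zero_apply]
      linear_combination hx0 x + h1 x
    · funext x
      apply mul_left_cancel₀ ha0
      apply mul_left_cancel₀ h20
      simp only [Pi.zero_apply]
      linear_combination hx0 x - h1 x
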